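/- Let G be a connected simple graph on n vertices with 2 ≤ n ≤ 7. If ψ_{n−1}(G) = 2, then ψ_n(G) = 1 (equivalently, G has a Hamiltonian path). -/

import Mathlib

/-- `S` is a `k`-path vertex cover of `G`: every path in `G` on `k` vertices
(i.e. whose support has `k` vertices) contains at least one vertex of `S`. -/
def SimpleGraph.IsPathVertexCover {V : Type*} (G : SimpleGraph V) (k : ℕ) (S : Set V) : Prop :=
  ∀ ⦃u w : V⦄ (p : G.Walk u w), p.IsPath → p.support.length = k → ∃ x ∈ p.support, x ∈ S

/-- `ψ_k(G)`: the minimum cardinality of a `k`-path vertex cover of `G`. -/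
noncomputable def SimpleGraph.pathNum {V : Type*} [Fintype V] (G : SimpleGraph V) (k : ℕ) : ℕ :=
  sInf {m : ℕ | ∃ S : Finset V, G.IsPathVertexCover k ↑S ∧ S.card = m}

/-!
If `1 < ψ_{n-1}(G)`, then every vertex-deleted subgraph of `G` has a Hamiltonian path. Suppose `G`
has none. A vertex `v` cannot be inserted into a Hamiltonian path of `G - v`, so its neighbours are
interior vertices of that path, no two of them consecutive; this gives `2 * deg v + 2 ≤ n`. On the
other hand, if `a` is a neighbour of `v`, then `v` is not an end of a Hamiltonian path of `G - a`,
so it has two neighbours on that path, and `deg v ≥ 3`. Hence `n ≥ 8`.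
-/

theorem two_mul_countP_le_length {α : Type*} {P : α → Prop} [DecidablePred P] {l : List α}
    (hchain : l.IsChain fun x y ↦ ¬ (P x ∧ P y)) (hlast : ∀ x ∈ l.getLast?, ¬ P x) :
    2 * l.countP P ≤ l.length := by
  induction l using List.twoStepInduction with
  | nil => simp
  | singleton x => simp_all
  | cons_cons x y l ih_tail ih_cons =>
    obtain ⟨hxy, hyl⟩ := List.isChain_cons_cons.1 hchain
    by_cases hx : P x
    · have hy : ¬ P y := fun hy ↦ hxy ⟨hx, hy⟩
      have hl : 2 * l.countP P ≤ l.length :=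
        ih_tail hyl.of_cons fun z hz ↦ hlast z (by cases l <;> simp_all)
      rw [List.countP_cons_of_pos (by simpa using hx), List.countP_cons_of_neg (by simpa using hy),
        List.length_cons, List.length_cons]
      lia
    · have hl : 2 * (y :: l).countP P ≤ (y :: l).length := ih_cons y hyl (by simpa using hlast)
      rw [List.countP_cons_of_neg (by simpa using hx), List.length_cons]
      lia

theorem two_mul_countP_lt_length {α : Type*} {P : α → Prop} [DecidablePred P] {l : List α}
    (hne : l ≠ []) (hchain : l.IsChain fun x y ↦ ¬ (P x ∧ P y))
    (hhead : ∀ x ∈ l.head?, ¬ P x) (hlast : ∀ x ∈ l.getLast?, ¬ P x) :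
    2 * l.countP P < l.length := by
  obtain ⟨x, l, rfl⟩ := List.exists_cons_of_ne_nil hne
  have hx : ¬ P x := hhead x rfl
  have hl : 2 * l.countP P ≤ l.length :=
    two_mul_countP_le_length hchain.of_cons fun z hz ↦ hlast z (by cases l <;> simp_all)
  rw [List.countP_cons_of_neg (by simpa using hx), List.length_cons]
  lia

theorem ncard_inter_setOf_mem_eq_countP {α : Type*} {P : α → Prop} [DecidablePred P] {l : List α}
    (hnd : l.Nodup) : ({x | P x} ∩ {x | x ∈ l}).ncard = l.countP P := by
  classical
  have hset : {x | P x} ∩ {x | x ∈ l} = ((l.filter P).toFinset : Set α) := by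
    ext x
    simp [and_comm]
  rw [hset, Set.ncard_coe_finset, List.toFinset_card_of_nodup (hnd.filter _),
    List.countP_eq_length_filter]

theorem ncard_setOf_mem_eq_length {α : Type*} {l : List α} (hnd : l.Nodup) :
    {x | x ∈ l}.ncard = l.length := by
  simpa using ncard_inter_setOf_mem_eq_countP (P := fun _ ↦ True) hnd

section

variable {V : Type*} {G : SimpleGraph V} {s : Set V} {a v : V}

/-- `s` is the vertex set of a path of `G`, i.e. the subgraph induced on `s` has a Hamiltonian path.
The empty set does not qualify, since a walk has at least one vertex. -/
def IsTraceableOn (G : SimpleGraph V) (s : Set V) : Prop :=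
  ∃ (u w : V) (p : G.Walk u w), p.IsPath ∧ {x | x ∈ p.support} = s

/-- A hypotraceable graph: it has no Hamiltonian path, but all its vertex-deleted subgraphs do.
The edgeless graphs on zero and on two vertices qualify as degenerate cases. -/
structure IsHypotraceable (G : SimpleGraph V) : Prop where
  not_isTraceableOn_univ : ¬ IsTraceableOn G Set.univ
  isTraceableOn_compl_singleton (v : V) : IsTraceableOn G {v}ᶜ

theorem isTraceableOn_setOf_mem {l : List V} (hne : l ≠ []) (hc : l.IsChain G.Adj)
    (hnd : l.Nodup) : IsTraceableOn G {x | x ∈ l} := by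
  refine ⟨_, _, SimpleGraph.Walk.ofSupport l hne hc, ?_, ?_⟩
  · rwa [SimpleGraph.Walk.isPath_def, SimpleGraph.Walk.support_ofSupport]
  · rw [SimpleGraph.Walk.support_ofSupport]

theorem IsTraceableOn.exists_list (hs : IsTraceableOn G s) :
    ∃ l : List V, l ≠ [] ∧ l.IsChain G.Adj ∧ l.Nodup ∧ {x | x ∈ l} = s := by
  obtain ⟨u, w, p, hp, rfl⟩ := hs
  exact ⟨p.support, p.support_ne_nil, p.isChain_adj_support, hp.support_nodup, rfl⟩

section Insertion

variable {l l₁ l₂ : List V}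

theorem isTraceableOn_insert (hc : (l₁ ++ l₂).IsChain G.Adj) (hnd : (l₁ ++ l₂).Nodup)
    (hv : v ∉ l₁ ++ l₂) (h₁ : ∀ x ∈ l₁.getLast?, G.Adj v x) (h₂ : ∀ y ∈ l₂.head?, G.Adj v y) :
    IsTraceableOn G (insert v {x | x ∈ l₁ ++ l₂}) := by
  have hc' : (l₁ ++ v :: l₂).IsChain G.Adj :=
    hc.left_of_append.append (hc.right_of_append.cons h₂) (by simpa [G.adj_comm _ v] using h₁)
  have hset : insert v {x | x ∈ l₁ ++ l₂} = {x | x ∈ l₁ ++ v :: l₂} := by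
    ext x
    simp [or_left_comm]
  rw [hset]
  exact isTraceableOn_setOf_mem (by simp) hc' (List.nodup_middle.2 (hnd.cons hv))

theorem not_adj_of_mem_head? (hc : l.IsChain G.Adj) (hnd : l.Nodup) (hv : v ∉ l)
    (h : ¬ IsTraceableOn G (insert v {x | x ∈ l})) :
    ∀ x ∈ l.head?, ¬ G.Adj v x :=
  fun x hx hvx ↦ h <| isTraceableOn_insert (l₁ := []) hc hnd hv (by simp) (by simp_all)

theorem not_adj_of_mem_getLast? (hc : l.IsChain G.Adj) (hnd : l.Nodup) (hv : v ∉ l)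
    (h : ¬ IsTraceableOn G (insert v {x | x ∈ l})) :
    ∀ x ∈ l.getLast?, ¬ G.Adj v x := by
  intro x hx hvx
  rw [← l.append_nil] at hc hnd hv h
  exact h <| isTraceableOn_insert hc hnd hv (by simp_all) (by simp)

theorem isChain_not_adj_and_adj (hc : l.IsChain G.Adj) (hnd : l.Nodup) (hv : v ∉ l)
    (h : ¬ IsTraceableOn G (insert v {x | x ∈ l})) :
    l.IsChain fun x y ↦ ¬ (G.Adj v x ∧ G.Adj v y) := by
  rw [List.isChain_iff_forall_rel_of_append_cons_cons]
  rintro x y l₁ l₂ rfl ⟨hvx, hvy⟩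
  rw [List.append_cons] at hc hnd hv h
  exact h <| isTraceableOn_insert hc hnd hv (by simpa using hvx) (by simpa using hvy)

end Insertion

theorem two_mul_ncard_neighborSet_inter_lt (hs : IsTraceableOn G s) (hv : v ∉ s)
    (h : ¬ IsTraceableOn G (insert v s)) : 2 * (G.neighborSet v ∩ s).ncard < s.ncard := by
  classical
  obtain ⟨l, hne, hc, hnd, rfl⟩ := hs.exists_list
  rw [ncard_setOf_mem_eq_length hnd, SimpleGraph.neighborSet, ncard_inter_setOf_mem_eq_countP hnd]
  exact two_mul_countP_lt_length hne (isChain_not_adj_and_adj hc hnd hv h)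
    (not_adj_of_mem_head? hc hnd hv h) (not_adj_of_mem_getLast? hc hnd hv h)

theorem two_le_ncard_neighborSet_inter (hs : IsTraceableOn G s) (ha : a ∉ s)
    (h : ¬ IsTraceableOn G (insert a s)) (hv : v ∈ s) (hav : G.Adj a v) :
    2 ≤ (G.neighborSet v ∩ s).ncard := by
  obtain ⟨l, hne, hc, hnd, rfl⟩ := hs.exists_list
  obtain ⟨l₁, l₂, rfl⟩ := List.append_of_mem hv
  rcases l₁.eq_nil_or_concat with rfl | ⟨l₁, x, rfl⟩
  · exact (not_adj_of_mem_head? hc hnd ha h v rfl hav).elim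
  rcases l₂ with _ | ⟨y, l₂⟩
  · exact (not_adj_of_mem_getLast? hc hnd ha h v (by simp) hav).elim
  simp only [List.concat_eq_append, List.append_assoc, List.singleton_append] at hc hnd ⊢
  have hxv : G.Adj x v := (List.isChain_append_cons_cons.1 hc).2.1
  have hvy : G.Adj v y := (List.isChain_append_cons_cons.1 hc).2.2.rel
  have hxy : x ≠ y := by
    rintro rfl
    simp [List.nodup_append] at hnd
  rw [← Set.ncard_pair hxy]
  refine Set.ncard_le_ncard ?_ ((List.finite_toSet _).inter_of_right _)
  simp [Set.insert_subset_iff, hxv.symm, hvy]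

namespace IsHypotraceable

theorem not_isTraceableOn_insert_compl_singleton (hG : IsHypotraceable G) (v : V) :
    ¬ IsTraceableOn G (insert v {v}ᶜ) := by
  rw [Set.insert_eq, Set.union_compl_self]
  exact hG.not_isTraceableOn_univ

theorem two_mul_ncard_neighborSet_add_two_le_card [Fintype V] (hG : IsHypotraceable G) (v : V) :
    2 * (G.neighborSet v).ncard + 2 ≤ Fintype.card V := by
  have hlt := two_mul_ncard_neighborSet_inter_lt (hG.isTraceableOn_compl_singleton v)
    (Set.notMem_compl_iff.2 rfl) (hG.not_isTraceableOn_insert_compl_singleton v)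
  have hsub : G.neighborSet v ⊆ {v}ᶜ := fun x hx ↦ hx.ne'
  have hcard := Set.ncard_add_ncard_compl {v}
  rw [Set.ncard_singleton, Nat.card_eq_fintype_card] at hcard
  rw [Set.inter_eq_left.2 hsub] at hlt
  lia

theorem three_le_ncard_neighborSet [Finite V] (hG : IsHypotraceable G) (hva : G.Adj v a) :
    3 ≤ (G.neighborSet v).ncard := by
  have htwo : 2 ≤ (G.neighborSet v ∩ {a}ᶜ).ncard :=
    two_le_ncard_neighborSet_inter (hG.isTraceableOn_compl_singleton a)
      (Set.notMem_compl_iff.2 rfl) (hG.not_isTraceableOn_insert_compl_singleton a) hva.ne hva.symm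
  have ha : (G.neighborSet v \ {a}).ncard + 1 = (G.neighborSet v).ncard :=
    Set.ncard_sdiff_singleton_add_one hva
  rw [Set.sdiff_eq] at ha
  lia

theorem eight_le_card [Fintype V] (hG : IsHypotraceable G) (hva : G.Adj v a) :
    8 ≤ Fintype.card V := by
  have hupper := hG.two_mul_ncard_neighborSet_add_two_le_card v
  have hlower := hG.three_le_ncard_neighborSet hva
  lia

end IsHypotraceable

theorem isPathVertexCover_ncard_compl_iff (hfin : s.Finite) :
    G.IsPathVertexCover s.ncard sᶜ ↔ ¬ IsTraceableOn G s := by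
  constructor
  · rintro hcover ⟨u, w, p, hp, rfl⟩
    obtain ⟨x, hx, hx'⟩ := hcover p hp (ncard_setOf_mem_eq_length hp.support_nodup).symm
    exact hx' hx
  · intro hs u w p hp hlen
    by_contra! hdisj
    have hsub : {x | x ∈ p.support} ⊆ s := fun x hx ↦ not_not.1 (hdisj x hx)
    refine hs ⟨u, w, p, hp, Set.eq_of_subset_of_ncard_le hsub ?_ hfin⟩
    rw [ncard_setOf_mem_eq_length hp.support_nodup, hlen]

section PathNum

variable [Fintype V]

theorem pathNum_le_card {k : ℕ} {S : Finset V} (hS : G.IsPathVertexCover k S) :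
    G.pathNum k ≤ S.card :=
  Nat.sInf_le ⟨S, hS, rfl⟩

theorem isPathVertexCover_card_of_nonempty {S : Set V} (hS : S.Nonempty) :
    G.IsPathVertexCover (Fintype.card V) S := by
  intro u w p hp hlen
  obtain ⟨x, hx⟩ := hS
  have hsupp : {y | y ∈ p.support} = Set.univ := by
    rw [Set.eq_univ_iff_ncard, ncard_setOf_mem_eq_length hp.support_nodup, hlen,
      Nat.card_eq_fintype_card]
  exact ⟨x, Set.eq_univ_iff_forall.1 hsupp x, hx⟩

theorem pathNum_card_eq_one (hG : IsTraceableOn G Set.univ) :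
    G.pathNum (Fintype.card V) = 1 := by
  have ⟨v, _⟩ := hG
  have hsingleton : G.IsPathVertexCover (Fintype.card V) ({v} : Finset V) :=
    isPathVertexCover_card_of_nonempty (by simp)
  have hempty : ¬ G.IsPathVertexCover (Fintype.card V) ∅ := by
    rw [← Set.compl_univ, ← Nat.card_eq_fintype_card, ← Set.ncard_univ,
      isPathVertexCover_ncard_compl_iff Set.finite_univ, not_not]
    exact hG
  refine le_antisymm (pathNum_le_card hsingleton) (le_csInf ⟨_, _, hsingleton, rfl⟩ ?_)
  rintro _ ⟨S, hS, rfl⟩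
  refine Finset.one_le_card.2 (Finset.nonempty_iff_ne_empty.2 ?_)
  rintro rfl
  exact hempty (by simpa using hS)

theorem isTraceableOn_compl_singleton_of_one_lt_pathNum
    (h : 1 < G.pathNum (Fintype.card V - 1)) (v : V) : IsTraceableOn G {v}ᶜ := by
  by_contra hv
  have hcover : G.IsPathVertexCover (Fintype.card V - 1) ({v} : Finset V) := by
    have := (isPathVertexCover_ncard_compl_iff (Set.toFinite _)).2 hv
    rwa [compl_compl, Set.ncard_compl, Set.ncard_singleton, Nat.card_eq_fintype_card,
      ← Finset.coe_singleton] at this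
  exact h.not_ge (by simpa using pathNum_le_card hcover)

end PathNum

end

theorem conjecture_small_graphs {V : Type*} [Fintype V] (G : SimpleGraph V)
    (hn2 : 2 ≤ Fintype.card V) (hn7 : Fintype.card V ≤ 7) (hconn : G.Connected)
    (h : G.pathNum (Fintype.card V - 1) = 2) :
    G.pathNum (Fintype.card V) = 1 := by
  have : Nontrivial V := Fintype.one_lt_card_iff_nontrivial.1 hn2
  obtain ⟨v⟩ := hconn.nonempty
  obtain ⟨a, hva⟩ := hconn.preconnected.exists_adj_of_nontrivial v
  by_contra hψ
  have hG : IsHypotraceable G :=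
    ⟨mt pathNum_card_eq_one hψ, isTraceableOn_compl_singleton_of_one_lt_pathNum (by lia)⟩
  have hcard : 8 ≤ Fintype.card V := hG.eight_le_card hva
  lia
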